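/- Let S and T be sets, let ψ : S × T → ℂ, and suppose there is a constant C such that for every function ε : S × T → ℂ with |ε(s,t)| ≤ 1 for all (s,t), the pointwise product (s,t) ↦ ε(s,t)·ψ(s,t) is a Schur multiplier of norm at most C. Then there is a partition S × T = Γ₁ ∪ Γ₂ (disjoint) such that sup_{s∈S} Σ_{t : (s,t)∈Γ₁} |ψ(s,t)|² ≤ (4C)² and sup_{t∈T} Σ_{s : (s,t)∈Γ₂} |ψ(s,t)|² ≤ (4C)². -/

import Mathlib

open scoped ENNReal NNReal
open MeasureTheory ContinuousLinearMap

noncomputable section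

/-- `ψ : S × T → ℂ` is a Schur multiplier of norm at most `C`: for every bounded operator
`A : ℓ²(S) → ℓ²(T)` there is a bounded `B : ℓ²(S) → ℓ²(T)` whose matrix entries are
`ψ(s,t) · A(s,t)` and with `‖B‖ ≤ C‖A‖`. -/
def IsSchurMultiplier {S T : Type*} (ψ : S × T → ℂ) (C : ℝ) : Prop :=
  letI := Classical.decEq S
  letI := Classical.decEq T
  ∀ A : lp (fun _ : S => ℂ) 2 →L[ℂ] lp (fun _ : T => ℂ) 2,
    ∃ B : lp (fun _ : S => ℂ) 2 →L[ℂ] lp (fun _ : T => ℂ) 2,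
      (∀ (s : S) (t : T),
        (inner (𝕜 := ℂ) (lp.single 2 t 1) (B (lp.single 2 s 1)))
          = ψ (s, t) * inner (𝕜 := ℂ) (lp.single 2 t 1) (A (lp.single 2 s 1))) ∧
      ‖B‖ ≤ C * ‖A‖

/-!
Call a matrix `x` *small* if all of its rows and columns lie in the unit ball of `ℓ²`. Flip the
signs of its entries at random, giving `X`. The truncation `X (1 + X* X)⁻¹` has operator norm at
most `1/2`, while its error `X (1 + X* X)⁻¹ X* X` is small on average because, in expectation, each
column of `X* X` has `ℓ²` norm squared at most `2`. Undoing the signs and iterating on the error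
shows that if `∑ w |A| ≤ L ‖A‖` for all matrices `A`, then `∑ w |x| ≤ 2 L` for all small `x`.

The hypothesis on `ψ` bounds the norm of `(|ψ| |A|)` by `C ‖A‖`. Suppose that in some finite
rectangle all row sums `r s` and column sums `c t` of `|ψ|²` are at least `K`. Testing `(|ψ| |A|)`
against the vectors `√r` and `√c` gives a bound `∑ w |A| ≤ L ‖A‖` with weight `w = √r √c |ψ|` and
`L = C ∑ |ψ|²`; on the small matrix `√K |ψ| / (√r √c)` it says `√K ≤ 2 C`. So every finite rectangle
has a row or column whose sum is at most `(2 C)²`. Removing such lines one at a time partitions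
every finite rectangle, and a compactness argument partitions `S × T`.
-/

section Resolvent

open scoped Matrix Matrix.Norms.L2Operator ComplexOrder

lemma two_mul_norm_apply_le_norm_add_adjoint_apply {𝕜 E F : Type*} [RCLike 𝕜]
    [NormedAddCommGroup E] [InnerProductSpace 𝕜 E] [CompleteSpace E]
    [NormedAddCommGroup F] [InnerProductSpace 𝕜 F] [CompleteSpace F]
    (T : E →L[𝕜] F) (y : E) : 2 * ‖T y‖ ≤ ‖y + adjoint T (T y)‖ := by
  have h_inner : RCLike.re (inner 𝕜 y (adjoint T (T y))) = ‖T y‖ ^ 2 := by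
    rw [adjoint_inner_right, inner_self_eq_norm_sq]
  have h_expand : ‖y + adjoint T (T y)‖ ^ 2 =
      ‖y‖ ^ 2 + 2 * ‖T y‖ ^ 2 + ‖adjoint T (T y)‖ ^ 2 := by
    rw [norm_add_sq (𝕜 := 𝕜), h_inner]
  have h_cauchy : ‖T y‖ ^ 2 ≤ ‖y‖ * ‖adjoint T (T y)‖ :=
    h_inner ▸ re_inner_le_norm y (adjoint T (T y))
  refine le_of_sq_le_sq ?_ (norm_nonneg _)
  nlinarith [sq_nonneg (‖y‖ - ‖adjoint T (T y)‖)]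

variable {𝕜 m n : Type*} [RCLike 𝕜] [Fintype m] [Fintype n] [DecidableEq n]

lemma isUnit_det_one_add_conjTranspose_mul_self (X : Matrix m n 𝕜) :
    IsUnit (1 + Xᴴ * X).det :=
  (Matrix.isUnit_iff_isUnit_det _).1
    (Matrix.PosDef.one.add_posSemidef (Matrix.posSemidef_conjTranspose_mul_self X)).isUnit

/-- The smooth truncation `X (1 + X* X)⁻¹` of a matrix. -/
def resolventTruncation (X : Matrix m n 𝕜) : Matrix m n 𝕜 := X * (1 + Xᴴ * X)⁻¹

lemma sub_resolventTruncation (X : Matrix m n 𝕜) :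
    X - resolventTruncation X = resolventTruncation X * (Xᴴ * X) := by
  have h_cancel : resolventTruncation X * (1 + Xᴴ * X) = X :=
    Matrix.nonsing_inv_mul_cancel_right _ X (isUnit_det_one_add_conjTranspose_mul_self X)
  rw [Matrix.mul_add, Matrix.mul_one] at h_cancel
  exact sub_eq_of_eq_add' h_cancel.symm

lemma norm_mul_le_half_of_one_add_conjTranspose_mul_self_mul_eq_one {X : Matrix m n 𝕜}
    {G : Matrix n n 𝕜} (hG : (1 + Xᴴ * X) * G = 1) : ‖X * G‖ ≤ 1 / 2 := by
  classical
  rw [Matrix.l2_opNorm_def]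
  refine ContinuousLinearMap.opNorm_le_bound _ (by norm_num) fun z => ?_
  let T := (Matrix.toEuclideanLin X).toContinuousLinearMap
  let y := Matrix.toEuclideanLin G z
  have h_adj : adjoint T = (Matrix.toEuclideanLin Xᴴ).toContinuousLinearMap := by
    rw [Matrix.toEuclideanLin_conjTranspose_eq_adjoint, LinearMap.adjoint_toContinuousLinearMap]
  have h_preimage : y + adjoint T (T y) = z := by
    calc y + adjoint T (T y) = Matrix.toEuclideanLin ((1 + Xᴴ * X) * G) z := by
          rw [h_adj, Matrix.toLpLin_mul 2 2 2, map_add, Matrix.toLpLin_mul 2 2 2 Xᴴ]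
          simp [T, y]
      _ = z := by simp [hG]
  have h_image : Matrix.toEuclideanLin (X * G) z = T y :=
    congr($(Matrix.toLpLin_mul 2 2 2 X G) z)
  have h_bound := two_mul_norm_apply_le_norm_add_adjoint_apply T y
  rw [h_preimage, ← h_image] at h_bound
  change ‖Matrix.toEuclideanLin (X * G) z‖ ≤ _
  linarith

lemma norm_resolventTruncation_le (X : Matrix m n 𝕜) : ‖resolventTruncation X‖ ≤ 1 / 2 :=
  norm_mul_le_half_of_one_add_conjTranspose_mul_self_mul_eq_one <|
    Matrix.mul_nonsing_inv _ (isUnit_det_one_add_conjTranspose_mul_self X)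

lemma sum_norm_sq_mul_apply_le {l : Type*} (A : Matrix m n 𝕜) (B : Matrix n l 𝕜) (j : l) :
    ∑ i, ‖(A * B) i j‖ ^ 2 ≤ ‖A‖ ^ 2 * ∑ k, ‖B k j‖ ^ 2 := by
  have := pow_le_pow_left₀ (norm_nonneg _) (A.l2_opNorm_mulVec (WithLp.toLp 2 (B.col j))) 2
  rw [mul_pow, EuclideanSpace.norm_sq_eq, EuclideanSpace.norm_sq_eq] at this
  exact this

lemma sum_norm_sq_sub_resolventTruncation_le (X : Matrix m n 𝕜) (j : n) :
    ∑ i, ‖(X - resolventTruncation X) i j‖ ^ 2 ≤ 1 / 4 * ∑ k, ‖(Xᴴ * X) k j‖ ^ 2 := by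
  rw [sub_resolventTruncation]
  refine (sum_norm_sq_mul_apply_le _ _ j).trans ?_
  gcongr
  exact (pow_le_pow_left₀ (norm_nonneg _) (norm_resolventTruncation_le X) 2).trans_eq
    (by norm_num)

lemma conjTranspose_resolventTruncation [DecidableEq m] (X : Matrix m n 𝕜) :
    (resolventTruncation X)ᴴ = resolventTruncation Xᴴ := by
  have h_unit := isUnit_det_one_add_conjTranspose_mul_self X
  have h_unit' : IsUnit (1 + X * Xᴴ).det := by
    simpa using isUnit_det_one_add_conjTranspose_mul_self Xᴴ
  calc (resolventTruncation X)ᴴ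
      = (1 + Xᴴ * X)⁻¹ * (Xᴴ * (1 + X * Xᴴ) * (1 + X * Xᴴ)⁻¹) := by
        rw [Matrix.mul_nonsing_inv_cancel_right _ _ h_unit']
        simp [resolventTruncation, Matrix.conjTranspose_nonsing_inv]
    _ = (1 + Xᴴ * X)⁻¹ * ((1 + Xᴴ * X) * (Xᴴ * (1 + X * Xᴴ)⁻¹)) := by
        simp only [Matrix.mul_add, Matrix.add_mul, Matrix.one_mul, Matrix.mul_one,
          Matrix.mul_assoc]
    _ = resolventTruncation Xᴴ := by
        rw [Matrix.nonsing_inv_mul_cancel_left _ _ h_unit, resolventTruncation,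
          Matrix.conjTranspose_conjTranspose]

end Resolvent

section RandomSigns

open scoped BigOperators Matrix

lemma norm_expect_sq_le {𝕜 ι : Type*} [RCLike 𝕜] [Fintype ι] [Nonempty ι] (f : ι → 𝕜) :
    ‖𝔼 i, f i‖ ^ 2 ≤ 𝔼 i, ‖f i‖ ^ 2 := by
  have h_jensen := Finset.expect_mul_sq_le_sq_mul_sq Finset.univ (fun _ => 1) fun i => ‖f i‖
  simp only [one_mul, one_pow, Fintype.expect_const] at h_jensen
  exact (pow_le_pow_left₀ (norm_nonneg _) (RCLike.norm_expect_le (K := 𝕜)) 2).trans h_jensen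

lemma expect_eq_zero_of_comp_equiv_eq_neg {Ω M : Type*} [Fintype Ω] [AddCommGroup M]
    [Module ℚ≥0 M] [IsAddTorsionFree M] (e : Ω ≃ Ω) {f : Ω → M} (hf : ∀ ω, f (e ω) = -f ω) :
    𝔼 ω, f ω = 0 := by
  refine self_eq_neg.1 ?_
  rw [← Finset.expect_neg_distrib]
  exact Fintype.expect_equiv e.symm _ _ fun ω => by rw [← hf, e.apply_symm_apply]

lemma expect_norm_sq_sum_of_orthogonal {𝕜 E Ω ι : Type*} [RCLike 𝕜] [SeminormedAddCommGroup E]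
    [InnerProductSpace 𝕜 E] [Fintype Ω] [Fintype ι] {f : ι → Ω → E}
    (hf : Pairwise fun i j => 𝔼 ω, inner 𝕜 (f i ω) (f j ω) = 0) :
    𝔼 ω, ‖∑ i, f i ω‖ ^ 2 = ∑ i, 𝔼 ω, ‖f i ω‖ ^ 2 := by
  classical
  have h_expand (ω : Ω) :
      ((‖∑ i, f i ω‖ ^ 2 : ℝ) : 𝕜) = ∑ i, ∑ j, inner 𝕜 (f i ω) (f j ω) := by
    simp only [RCLike.ofReal_pow, ← inner_self_eq_norm_sq_to_K (𝕜 := 𝕜), sum_inner, inner_sum]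
    exact Finset.sum_comm
  apply RCLike.ofReal_injective (K := 𝕜)
  simp only [RCLike.ofReal_expect, RCLike.ofReal_sum, h_expand, Finset.expect_sum_comm]
  refine Finset.sum_congr rfl fun i _ => ?_
  rw [Finset.sum_eq_single i (fun j _ hj => hf hj.symm) (by simp)]
  simp only [inner_self_eq_norm_sq_to_K, RCLike.ofReal_pow]

variable {𝕜 m n : Type*} [RCLike 𝕜]

/-- The matrix `x` with its entries multiplied by the signs `ω`. -/
def signed (ω : m → n → ℤˣ) (x : Matrix m n 𝕜) : Matrix m n 𝕜 :=
  Matrix.of fun i j => ω i j • x i j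

lemma signed_apply (ω : m → n → ℤˣ) (x : Matrix m n 𝕜) (i : m) (j : n) :
    signed ω x i j = ω i j • x i j := rfl

lemma norm_signed_apply (ω : m → n → ℤˣ) (x : Matrix m n 𝕜) (i : m) (j : n) :
    ‖signed ω x i j‖ = ‖x i j‖ := norm_units_zsmul _ _

lemma conjTranspose_signed (ω : m → n → ℤˣ) (x : Matrix m n 𝕜) :
    (signed ω x)ᴴ = signed (Function.swap ω) xᴴ := by
  ext j i
  simp [signed_apply, Units.smul_def]

lemma signed_mulSingle_mul_apply_of_ne [DecidableEq m] [DecidableEq n] (ω : m → n → ℤˣ)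
    (x : Matrix m n 𝕜) {i i' : m} {j j' : n} (h : i' ≠ i ∨ j' ≠ j) :
    signed (Pi.mulSingle i (Pi.mulSingle j (-1)) * ω) x i' j' = signed ω x i' j' := by
  obtain h | h := h
  · simp [signed_apply, Pi.mulSingle_eq_of_ne h]
  · obtain rfl | hi := eq_or_ne i' i
    · simp [signed_apply, Pi.mulSingle_eq_of_ne h]
    · simp [signed_apply, Pi.mulSingle_eq_of_ne hi]

lemma signed_mulSingle_mul_apply_self [DecidableEq m] [DecidableEq n] (ω : m → n → ℤˣ)
    (x : Matrix m n 𝕜) (i : m) (j : n) :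
    signed (Pi.mulSingle i (Pi.mulSingle j (-1)) * ω) x i j = -signed ω x i j := by
  simp [signed_apply]

lemma norm_conjTranspose_mul_self_signed_apply_self [Fintype m] (ω : m → n → ℤˣ)
    (x : Matrix m n 𝕜) (j : n) :
    ‖((signed ω x)ᴴ * signed ω x) j j‖ = ∑ i, ‖x i j‖ ^ 2 := by
  have h_diag : ((signed ω x)ᴴ * signed ω x) j j = ((∑ i, ‖x i j‖ ^ 2 : ℝ) : 𝕜) := by
    simp [Matrix.mul_apply, RCLike.star_def, RCLike.conj_mul, norm_signed_apply]
  rw [h_diag, RCLike.norm_ofReal, abs_of_nonneg (by positivity)]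

variable [Fintype m] [Fintype n]

/-- The matrices all of whose rows and columns lie in the unit ball of `ℓ²`. -/
def rowColUnitBall (𝕜 m n : Type*) [RCLike 𝕜] [Fintype m] [Fintype n] : Set (Matrix m n 𝕜) :=
  {x | (∀ i, ∑ j, ‖x i j‖ ^ 2 ≤ 1) ∧ ∀ j, ∑ i, ‖x i j‖ ^ 2 ≤ 1}

lemma conjTranspose_mem_rowColUnitBall {x : Matrix m n 𝕜} (hx : x ∈ rowColUnitBall 𝕜 m n) :
    xᴴ ∈ rowColUnitBall 𝕜 n m := by
  simpa [rowColUnitBall, and_comm] using hx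

variable [DecidableEq m] [DecidableEq n]

lemma expect_norm_sq_conjTranspose_mul_self_signed_apply (x : Matrix m n 𝕜) {j j' : n}
    (hj : j' ≠ j) :
    𝔼 ω : m → n → ℤˣ, ‖((signed ω x)ᴴ * signed ω x) j' j‖ ^ 2 =
      ∑ i, ‖x i j'‖ ^ 2 * ‖x i j‖ ^ 2 := by
  have h_orthogonal : Pairwise fun i i' => 𝔼 ω : m → n → ℤˣ,
      inner 𝕜 (star (signed ω x i j') * signed ω x i j)
        (star (signed ω x i' j') * signed ω x i' j) = 0 := by
    intro i i' hi
    refine expect_eq_zero_of_comp_equiv_eq_neg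
      (Equiv.mulLeft (Pi.mulSingle i (Pi.mulSingle j (-1)))) fun ω => ?_
    simp only [Equiv.coe_mulLeft, signed_mulSingle_mul_apply_self,
      signed_mulSingle_mul_apply_of_ne _ _ (.inr hj),
      signed_mulSingle_mul_apply_of_ne _ _ (.inl hi.symm), mul_neg, inner_neg_left]
  simp only [Matrix.mul_apply, Matrix.conjTranspose_apply]
  rw [expect_norm_sq_sum_of_orthogonal h_orthogonal]
  simp only [norm_mul, norm_star, norm_signed_apply, mul_pow, Fintype.expect_const]

lemma expect_sum_norm_sq_conjTranspose_mul_self_signed_le {x : Matrix m n 𝕜}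
    (hx : x ∈ rowColUnitBall 𝕜 m n) (j : n) :
    𝔼 ω : m → n → ℤˣ, ∑ j', ‖((signed ω x)ᴴ * signed ω x) j' j‖ ^ 2 ≤ 2 := by
  have h_diag : 𝔼 ω : m → n → ℤˣ, ‖((signed ω x)ᴴ * signed ω x) j j‖ ^ 2 ≤ 1 := by
    simp only [norm_conjTranspose_mul_self_signed_apply_self, Fintype.expect_const]
    exact pow_le_one₀ (by positivity) (hx.2 j)
  have h_offDiag : ∑ j' ∈ Finset.univ.erase j,
      𝔼 ω : m → n → ℤˣ, ‖((signed ω x)ᴴ * signed ω x) j' j‖ ^ 2 ≤ 1 := calc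
    _ = ∑ j' ∈ Finset.univ.erase j, ∑ i, ‖x i j'‖ ^ 2 * ‖x i j‖ ^ 2 :=
      Finset.sum_congr rfl fun j' hj' =>
        expect_norm_sq_conjTranspose_mul_self_signed_apply x (Finset.ne_of_mem_erase hj')
    _ ≤ ∑ j', ∑ i, ‖x i j'‖ ^ 2 * ‖x i j‖ ^ 2 :=
      Finset.sum_le_univ_sum_of_nonneg fun j' => by positivity
    _ = ∑ i, (∑ j', ‖x i j'‖ ^ 2) * ‖x i j‖ ^ 2 := by
      rw [Finset.sum_comm]; simp only [Finset.sum_mul]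
    _ ≤ ∑ i, ‖x i j‖ ^ 2 :=
      Finset.sum_le_sum fun i _ => mul_le_of_le_one_left (by positivity) (hx.1 i)
    _ ≤ 1 := hx.2 j
  rw [Finset.expect_sum_comm, ← Finset.add_sum_erase _ _ (Finset.mem_univ j)]
  linarith

/-- The average over all sign patterns `ω` of the resolvent truncation conjugated by `signed ω`. -/
def averagedTruncation (x : Matrix m n 𝕜) : Matrix m n 𝕜 :=
  Matrix.of fun i j => 𝔼 ω : m → n → ℤˣ, signed ω (resolventTruncation (signed ω x)) i j

lemma sub_averagedTruncation_apply (x : Matrix m n 𝕜) (i : m) (j : n) :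
    (x - averagedTruncation x) i j =
      𝔼 ω : m → n → ℤˣ, signed ω (signed ω x - resolventTruncation (signed ω x)) i j := by
  simp only [signed_apply, Matrix.sub_apply, averagedTruncation, Matrix.of_apply, smul_sub,
    smul_smul, Int.units_mul_self, one_smul, Finset.expect_sub_distrib, Fintype.expect_const]

lemma conjTranspose_averagedTruncation (x : Matrix m n 𝕜) :
    (averagedTruncation x)ᴴ = averagedTruncation xᴴ := by
  ext j i
  have h_star (ω : m → n → ℤˣ) : star (signed ω (resolventTruncation (signed ω x)) i j) =
      signed (Function.swap ω) (resolventTruncation (signed (Function.swap ω) xᴴ)) j i := by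
    rw [← conjTranspose_signed, ← conjTranspose_resolventTruncation, ← conjTranspose_signed,
      Matrix.conjTranspose_apply]
  simp only [Matrix.conjTranspose_apply, averagedTruncation, Matrix.of_apply]
  rw [RCLike.star_def, map_expect]
  exact Fintype.expect_equiv (Equiv.piComm _) _ _ h_star

lemma sum_norm_sq_sub_averagedTruncation_le {x : Matrix m n 𝕜}
    (hx : x ∈ rowColUnitBall 𝕜 m n) (j : n) :
    ∑ i, ‖(x - averagedTruncation x) i j‖ ^ 2 ≤ 1 / 2 := calc
  _ ≤ ∑ i, 𝔼 ω : m → n → ℤˣ, ‖(signed ω x - resolventTruncation (signed ω x)) i j‖ ^ 2 := by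
    gcongr with i
    rw [sub_averagedTruncation_apply]
    refine (norm_expect_sq_le _).trans_eq ?_
    simp only [norm_signed_apply]
  _ = 𝔼 ω : m → n → ℤˣ, ∑ i, ‖(signed ω x - resolventTruncation (signed ω x)) i j‖ ^ 2 :=
    (Finset.expect_sum_comm ..).symm
  _ ≤ 𝔼 ω : m → n → ℤˣ, 1 / 4 * ∑ j', ‖((signed ω x)ᴴ * signed ω x) j' j‖ ^ 2 :=
    Finset.expect_le_expect fun ω _ => sum_norm_sq_sub_resolventTruncation_le _ j
  _ ≤ 1 / 4 * 2 := by
    rw [← Finset.mul_expect]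
    gcongr
    exact expect_sum_norm_sq_conjTranspose_mul_self_signed_le hx j
  _ = 1 / 2 := by norm_num

-- The lines of the error have norm at most `1/√2`; `3/4` is a rational upper bound for it.
lemma smul_sub_averagedTruncation_mem_rowColUnitBall {x : Matrix m n 𝕜}
    (hx : x ∈ rowColUnitBall 𝕜 m n) :
    (4 / 3 : 𝕜) • (x - averagedTruncation x) ∈ rowColUnitBall 𝕜 m n := by
  have h_entry (i : m) (j : n) : ‖((4 / 3 : 𝕜) • (x - averagedTruncation x)) i j‖ ^ 2 =
      (4 / 3) ^ 2 * ‖(x - averagedTruncation x) i j‖ ^ 2 := by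
    rw [Matrix.smul_apply, norm_smul, mul_pow, norm_div, RCLike.norm_ofNat, RCLike.norm_ofNat]
  have h_row (i : m) : ∑ j, ‖(x - averagedTruncation x) i j‖ ^ 2 ≤ 1 / 2 := by
    simpa only [← conjTranspose_averagedTruncation, ← Matrix.conjTranspose_sub,
      Matrix.conjTranspose_apply, norm_star] using
      sum_norm_sq_sub_averagedTruncation_le (conjTranspose_mem_rowColUnitBall hx) i
  refine ⟨fun i => ?_, fun j => ?_⟩ <;> simp only [h_entry, ← Finset.mul_sum]
  · linarith [h_row i]
  · linarith [sum_norm_sq_sub_averagedTruncation_le hx j]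

end RandomSigns

section Duality

open scoped BigOperators Matrix.Norms.L2Operator

lemma le_div_one_sub_of_forall_exists_le_add_mul {α : Type*} {s : Set α} {f : α → ℝ} {L c : ℝ}
    (hf : BddAbove (f '' s)) (hc₀ : 0 ≤ c) (hc₁ : c < 1)
    (h : ∀ x ∈ s, ∃ y ∈ s, f x ≤ L + c * f y) {x : α} (hx : x ∈ s) : f x ≤ L / (1 - c) := by
  have h_sup : sSup (f '' s) ≤ L + c * sSup (f '' s) := by
    refine csSup_le ⟨_, Set.mem_image_of_mem f hx⟩ ?_
    rintro _ ⟨z, hz, rfl⟩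
    obtain ⟨y, hy, hzy⟩ := h z hz
    have h_le : f y ≤ sSup (f '' s) := le_csSup hf (Set.mem_image_of_mem f hy)
    exact hzy.trans (by gcongr)
  refine (le_csSup hf (Set.mem_image_of_mem f hx)).trans ?_
  rw [le_div_iff₀ (sub_pos.2 hc₁)]
  linarith

variable {𝕜 m n : Type*} [RCLike 𝕜] [Fintype m] [Fintype n]

lemma norm_apply_le_one_of_mem_rowColUnitBall {x : Matrix m n 𝕜}
    (hx : x ∈ rowColUnitBall 𝕜 m n) (i : m) (j : n) : ‖x i j‖ ≤ 1 := by
  refine le_of_sq_le_sq ?_ zero_le_one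
  rw [one_pow]
  exact (Finset.single_le_sum (f := fun j => ‖x i j‖ ^ 2) (fun _ _ => by positivity)
    (Finset.mem_univ j)).trans (hx.1 i)

variable {w : m → n → ℝ} {L : ℝ} [DecidableEq n]

lemma sum_mul_norm_averagedTruncation_le [DecidableEq m] (hw : ∀ i j, 0 ≤ w i j) (hL : 0 ≤ L)
    (h : ∀ A : Matrix m n 𝕜, ∑ i, ∑ j, w i j * ‖A i j‖ ≤ L * ‖A‖) (x : Matrix m n 𝕜) :
    ∑ i, ∑ j, w i j * ‖averagedTruncation x i j‖ ≤ L * (1 / 2) := calc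
  _ ≤ ∑ i, ∑ j, 𝔼 ω : m → n → ℤˣ, w i j * ‖resolventTruncation (signed ω x) i j‖ := by
    gcongr with i _ j
    rw [← Finset.mul_expect]
    gcongr
    · exact hw i j
    · refine (RCLike.norm_expect_le (K := 𝕜)).trans_eq ?_
      simp only [norm_signed_apply]
  _ = 𝔼 ω : m → n → ℤˣ, ∑ i, ∑ j, w i j * ‖resolventTruncation (signed ω x) i j‖ := by
    simp only [Finset.expect_sum_comm]
  _ ≤ L * (1 / 2) :=
    Finset.expect_le Finset.univ_nonempty fun ω _ => (h _).trans
      (mul_le_mul_of_nonneg_left (norm_resolventTruncation_le _) hL)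

theorem sum_mul_norm_le_two_mul_of_mem_rowColUnitBall (hw : ∀ i j, 0 ≤ w i j) (hL : 0 ≤ L)
    (h : ∀ A : Matrix m n 𝕜, ∑ i, ∑ j, w i j * ‖A i j‖ ≤ L * ‖A‖)
    {x : Matrix m n 𝕜} (hx : x ∈ rowColUnitBall 𝕜 m n) :
    ∑ i, ∑ j, w i j * ‖x i j‖ ≤ 2 * L := by
  classical
  let f (x : Matrix m n 𝕜) : ℝ := ∑ i, ∑ j, w i j * ‖x i j‖
  have h_bdd : BddAbove (f '' rowColUnitBall 𝕜 m n) := by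
    refine ⟨∑ i, ∑ j, w i j, ?_⟩
    rintro _ ⟨z, hz, rfl⟩
    exact Finset.sum_le_sum fun i _ => Finset.sum_le_sum fun j _ =>
      mul_le_of_le_one_right (hw i j) (norm_apply_le_one_of_mem_rowColUnitBall hz i j)
  have h_contract (z : Matrix m n 𝕜) :
      f z ≤ L * (1 / 2) + 3 / 4 * f ((4 / 3 : 𝕜) • (z - averagedTruncation z)) := calc
    f z ≤ f (averagedTruncation z) + f (z - averagedTruncation z) := by
      simp only [f, ← Finset.sum_add_distrib, ← mul_add]
      gcongr with i _ j
      · exact hw i j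
      · exact norm_le_insert' (z i j) (averagedTruncation z i j)
    _ ≤ _ := by
      refine add_le_add (sum_mul_norm_averagedTruncation_le hw hL h z) (le_of_eq ?_)
      simp only [f, Finset.mul_sum, Matrix.smul_apply, norm_smul, norm_div, RCLike.norm_ofNat]
      exact Finset.sum_congr rfl fun i _ => Finset.sum_congr rfl fun j _ => by ring
  have h_sup := le_div_one_sub_of_forall_exists_le_add_mul h_bdd (by norm_num)
    (by norm_num : (3 / 4 : ℝ) < 1) (fun z hz =>
      ⟨_, smul_sub_averagedTruncation_mem_rowColUnitBall hz, h_contract z⟩) hx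
  exact h_sup.trans_eq (by ring)

end Duality

section Compression

open scoped Matrix Matrix.Norms.L2Operator

variable {𝕜 E F m n : Type*} [RCLike 𝕜] [Fintype m] [Fintype n]
  [NormedAddCommGroup E] [InnerProductSpace 𝕜 E] [NormedAddCommGroup F] [InnerProductSpace 𝕜 F]
  {e : m → E} {f : n → F}

lemma exists_linearIsometry_single_eq_of_orthonormal [DecidableEq m] (he : Orthonormal 𝕜 e) :
    ∃ V : EuclideanSpace 𝕜 m →ₗᵢ[𝕜] E, ∀ i, V (EuclideanSpace.single i 1) = e i := by
  let b := EuclideanSpace.basisFun m 𝕜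
  have h_constr : b.toBasis.constr 𝕜 e ∘ b.toBasis = e := funext fun i => by simp
  have hb : Orthonormal 𝕜 b.toBasis := by
    rw [b.coe_toBasis]
    exact b.orthonormal
  refine ⟨(b.toBasis.constr 𝕜 e).isometryOfOrthonormal hb (h_constr.symm ▸ he), fun i => ?_⟩
  rw [LinearMap.coe_isometryOfOrthonormal, ← EuclideanSpace.basisFun_apply, ← b.coe_toBasis]
  exact congrFun h_constr i

lemma norm_comp_comp_le_of_norm_le_one {E' F' : Type*} [NormedAddCommGroup E'] [NormedSpace 𝕜 E']
    [NormedAddCommGroup F'] [NormedSpace 𝕜 F'] {P : F →L[𝕜] F'} {Q : E' →L[𝕜] E} (hP : ‖P‖ ≤ 1)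
    (hQ : ‖Q‖ ≤ 1) (M : E →L[𝕜] F) : ‖P ∘L M ∘L Q‖ ≤ ‖M‖ := calc
  ‖P ∘L M ∘L Q‖ ≤ ‖P‖ * (‖M‖ * ‖Q‖) :=
    (opNorm_comp_le _ _).trans (mul_le_mul_of_nonneg_left (opNorm_comp_le _ _) (norm_nonneg _))
  _ ≤ 1 * (‖M‖ * 1) := by gcongr
  _ = ‖M‖ := by ring

lemma norm_matrix_inner_le_of_orthonormal [DecidableEq m] [CompleteSpace F]
    (he : Orthonormal 𝕜 e) (hf : Orthonormal 𝕜 f) (B : E →L[𝕜] F) :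
    ‖(Matrix.of fun j i => inner 𝕜 (f j) (B (e i)) : Matrix n m 𝕜)‖ ≤ ‖B‖ := by
  classical
  obtain ⟨V, hV⟩ := exists_linearIsometry_single_eq_of_orthonormal he
  obtain ⟨W, hW⟩ := exists_linearIsometry_single_eq_of_orthonormal hf
  let W' := W.toContinuousLinearMap
  let M := adjoint W' ∘L B ∘L V.toContinuousLinearMap
  have h_matrix : (Matrix.toEuclideanLin
      (Matrix.of fun j i => inner 𝕜 (f j) (B (e i)))).toContinuousLinearMap = M := by
    refine ContinuousLinearMap.coe_injective
      ((EuclideanSpace.basisFun m 𝕜).toBasis.ext fun i => ?_)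
    ext j
    have h_entry : inner 𝕜 (EuclideanSpace.single j 1) (adjoint W' (B (e i))) =
        inner 𝕜 (f j) (B (e i)) := by
      rw [adjoint_inner_right, ← hW]; rfl
    simpa [M, hV, EuclideanSpace.inner_single_left] using h_entry.symm
  rw [Matrix.l2_opNorm_def]
  refine (congrArg norm h_matrix).trans_le
    (norm_comp_comp_le_of_norm_le_one ?_ V.norm_toContinuousLinearMap_le B)
  exact (adjoint.norm_map W').trans_le W.norm_toContinuousLinearMap_le

lemma exists_continuousLinearMap_inner_eq_of_orthonormal [DecidableEq m] [CompleteSpace E]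
    [CompleteSpace F] (he : Orthonormal 𝕜 e) (hf : Orthonormal 𝕜 f) (A : Matrix n m 𝕜) :
    ∃ B : E →L[𝕜] F, (∀ j i, inner 𝕜 (f j) (B (e i)) = A j i) ∧ ‖B‖ = ‖A‖ := by
  classical
  obtain ⟨V, hV⟩ := exists_linearIsometry_single_eq_of_orthonormal he
  obtain ⟨W, hW⟩ := exists_linearIsometry_single_eq_of_orthonormal hf
  let M : EuclideanSpace 𝕜 m →L[𝕜] EuclideanSpace 𝕜 n :=
    (Matrix.toEuclideanLin A).toContinuousLinearMap
  let V' := V.toContinuousLinearMap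
  let B := W.toContinuousLinearMap ∘L M ∘L adjoint V'
  have h_entry (j : n) (i : m) : inner 𝕜 (f j) (B (e i)) = A j i := by
    have h_adjoint : adjoint V' (e i) = EuclideanSpace.single i 1 := by
      rw [← hV]
      exact congr($(V.adjoint_comp_self) (EuclideanSpace.single i 1))
    simp [B, h_adjoint, ← hW, M, EuclideanSpace.inner_single_left]
  refine ⟨B, h_entry, le_antisymm ?_ ?_⟩
  · refine norm_comp_comp_le_of_norm_le_one W.norm_toContinuousLinearMap_le ?_ M
    exact (adjoint.norm_map V').trans_le V.norm_toContinuousLinearMap_le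
  · calc ‖A‖ = ‖Matrix.of fun j i => inner 𝕜 (f j) (B (e i))‖ := by simp_rw [h_entry]; rfl
      _ ≤ ‖B‖ := norm_matrix_inner_le_of_orthonormal he hf B

end Compression

section SchurMultiplier

open scoped Matrix Matrix.Norms.L2Operator

variable {S T m n : Type*} {ψ : S × T → ℂ} {C : ℝ}

lemma orthonormal_lp_single {𝕜 ι : Type*} [RCLike 𝕜] [DecidableEq ι] :
    Orthonormal 𝕜 fun i : ι => (lp.single 2 i 1 : lp (fun _ : ι => 𝕜) 2) := by
  rw [orthonormal_iff_ite]
  intro i j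
  rw [lp.inner_single_left, lp.single_apply]
  simp [Pi.single_apply]

variable [Fintype m] [Fintype n] [DecidableEq m]

lemma IsSchurMultiplier.norm_hadamard_le (h : IsSchurMultiplier ψ C) (a : m ↪ S) (b : n ↪ T)
    (A : Matrix n m ℂ) : ‖(Matrix.of fun t s => ψ (a s, b t)) ⊙ A‖ ≤ C * ‖A‖ := by
  classical
  have he := (orthonormal_lp_single (𝕜 := ℂ) (ι := S)).comp a a.injective
  have hf := (orthonormal_lp_single (𝕜 := ℂ) (ι := T)).comp b b.injective
  obtain ⟨Op, h_op, h_op_norm⟩ := exists_continuousLinearMap_inner_eq_of_orthonormal he hf A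
  obtain ⟨B, hB, hB_norm⟩ := h Op
  have h_entries : (Matrix.of fun t s => ψ (a s, b t)) ⊙ A =
      Matrix.of fun t s => inner ℂ (lp.single 2 (b t) 1 : lp (fun _ : T => ℂ) 2)
        (B (lp.single 2 (a s) 1)) := by
    ext t s
    exact ((hB (a s) (b t)).trans (congrArg _ (h_op t s))).symm
  rw [h_entries, ← h_op_norm]
  exact (norm_matrix_inner_le_of_orthonormal he hf B).trans hB_norm

lemma norm_of_norm_mul_norm_le_of_isSchurMultiplier
    (h : ∀ ε : S × T → ℂ, (∀ p, ‖ε p‖ = 1) → IsSchurMultiplier (fun p => ε p * ψ p) C)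
    (a : m ↪ S) (b : n ↪ T) (A : Matrix n m ℂ) :
    ‖(Matrix.of fun t s => ((‖ψ (a s, b t)‖ * ‖A t s‖ : ℝ) : ℂ))‖ ≤ C * ‖A‖ := by
  choose phase h_phase_norm h_phase using RCLike.exists_norm_eq_mul_self (K := ℂ)
  let ι := a.prodMap b
  let ε : S × T → ℂ := Function.extend ι (fun q => phase (ψ (ι q) * A q.2 q.1)) 1
  have h_norm (p : S × T) : ‖ε p‖ = 1 := by
    simp only [ε, Function.apply_extend norm, Function.comp_def, h_phase_norm]
    simp
  convert (h ε h_norm).norm_hadamard_le a b A using 2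
  ext t s
  have h_extend : ε (a s, b t) = phase (ψ (a s, b t) * A t s) :=
    ι.injective.extend_apply _ _ (s, t)
  simp [h_extend, mul_assoc, ← h_phase]

end SchurMultiplier

section LightLine

open scoped Matrix Matrix.Norms.L2Operator

variable {𝕜 m n : Type*} [RCLike 𝕜] [Fintype m] [Fintype n]
  {g : m → n → ℝ} {C K : ℝ}

lemma sqrt_mul_div_mem_rowColUnitBall (hK : 0 < K) (h_row : ∀ i, K ≤ ∑ j, g i j ^ 2)
    (h_col : ∀ j, K ≤ ∑ i, g i j ^ 2) :
    (Matrix.of fun i j => ((√K * g i j / (√(∑ j', g i j' ^ 2) * √(∑ i', g i' j ^ 2)) : ℝ) : 𝕜)) ∈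
      rowColUnitBall 𝕜 m n := by
  have h_rowPos (i : m) : 0 < ∑ j, g i j ^ 2 := hK.trans_le (h_row i)
  have h_colPos (j : n) : 0 < ∑ i, g i j ^ 2 := hK.trans_le (h_col j)
  have h_sq (i : m) (j : n) :
      ‖((√K * g i j / (√(∑ j', g i j' ^ 2) * √(∑ i', g i' j ^ 2)) : ℝ) : 𝕜)‖ ^ 2 =
        K * g i j ^ 2 / ((∑ j', g i j' ^ 2) * ∑ i', g i' j ^ 2) := by
    rw [RCLike.norm_ofReal, sq_abs, div_pow, mul_pow, mul_pow, Real.sq_sqrt hK.le,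
      Real.sq_sqrt (h_rowPos i).le, Real.sq_sqrt (h_colPos j).le]
  have h_div {a b c : ℝ} (ha : 0 ≤ a) (hb : 0 < b) (hc : K ≤ c) : K * a / (b * c) ≤ a / b := by
    rw [div_le_div_iff₀ (mul_pos hb (hK.trans_le hc)) hb]
    nlinarith [mul_nonneg (mul_nonneg ha hb.le) (sub_nonneg.2 hc)]
  refine ⟨fun i => ?_, fun j => ?_⟩ <;> simp only [Matrix.of_apply, h_sq]
  · calc _ ≤ ∑ j, g i j ^ 2 / ∑ j', g i j' ^ 2 :=
          Finset.sum_le_sum fun j _ => h_div (sq_nonneg _) (h_rowPos i) (h_col j)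
      _ = 1 := by rw [← Finset.sum_div, div_self (h_rowPos i).ne']
  · calc _ ≤ ∑ i, g i j ^ 2 / ∑ i', g i' j ^ 2 :=
          Finset.sum_le_sum fun i _ =>
            mul_comm (∑ j', g i j' ^ 2) _ ▸ h_div (sq_nonneg _) (h_colPos j) (h_row i)
      _ = 1 := by rw [← Finset.sum_div, div_self (h_colPos j).ne']

variable [DecidableEq n]

lemma norm_dotProduct_mulVec_le (A : Matrix m n 𝕜) (u : m → 𝕜) (v : n → 𝕜) :
    ‖u ⬝ᵥ A *ᵥ v‖ ≤ ‖A‖ * (‖WithLp.toLp 2 u‖ * ‖WithLp.toLp 2 v‖) := calc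
  ‖u ⬝ᵥ A *ᵥ v‖ = ‖inner 𝕜 (WithLp.toLp 2 (star u)) (WithLp.toLp 2 (A *ᵥ v))‖ := by
    rw [EuclideanSpace.inner_toLp_toLp, star_star, dotProduct_comm]
  _ ≤ ‖WithLp.toLp 2 (star u)‖ * ‖WithLp.toLp 2 (A *ᵥ v)‖ := norm_inner_le_norm _ _
  _ ≤ ‖WithLp.toLp 2 u‖ * (‖A‖ * ‖WithLp.toLp 2 v‖) := by
    gcongr
    · simp [EuclideanSpace.norm_eq]
    · exact A.l2_opNorm_mulVec (WithLp.toLp 2 v)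
  _ = ‖A‖ * (‖WithLp.toLp 2 u‖ * ‖WithLp.toLp 2 v‖) := by ring

lemma sum_mul_mul_le_norm_mul_sqrt_mul_sqrt (A : m → n → ℝ) (u : m → ℝ) (v : n → ℝ) :
    ∑ i, ∑ j, u i * (A i j * v j) ≤
      ‖(Matrix.of fun i j => (A i j : 𝕜))‖ * (√(∑ i, u i ^ 2) * √(∑ j, v j ^ 2)) := by
  have h_sum : (fun i => (u i : 𝕜)) ⬝ᵥ (Matrix.of fun i j => (A i j : 𝕜)) *ᵥ (fun j => (v j : 𝕜)) =
      ((∑ i, ∑ j, u i * (A i j * v j) : ℝ) : 𝕜) := by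
    simp [dotProduct, Matrix.mulVec, Finset.mul_sum]
  have h_bound := norm_dotProduct_mulVec_le (Matrix.of fun i j => (A i j : 𝕜)) (fun i => (u i : 𝕜))
    fun j => (v j : 𝕜)
  simp only [h_sum, RCLike.norm_ofReal, EuclideanSpace.norm_eq, sq_abs] at h_bound
  exact (le_abs_self _).trans h_bound

lemma nonneg_of_norm_of_mul_norm_le [Nonempty m] [Nonempty n]
    (h : ∀ A : Matrix m n 𝕜, ‖(Matrix.of fun i j => ((g i j * ‖A i j‖ : ℝ) : 𝕜))‖ ≤ C * ‖A‖) :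
    0 ≤ C := by
  obtain ⟨A, hA⟩ := exists_ne (0 : Matrix m n 𝕜)
  exact nonneg_of_mul_nonneg_left ((norm_nonneg _).trans (h A)) (norm_pos_iff.2 hA)

lemma sum_sqrt_mul_sqrt_mul_norm_le
    (h : ∀ A : Matrix m n 𝕜, ‖(Matrix.of fun i j => ((g i j * ‖A i j‖ : ℝ) : 𝕜))‖ ≤ C * ‖A‖)
    (A : Matrix m n 𝕜) :
    ∑ i, ∑ j, √(∑ j', g i j' ^ 2) * √(∑ i', g i' j ^ 2) * g i j * ‖A i j‖ ≤
      C * (∑ i, ∑ j, g i j ^ 2) * ‖A‖ := by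
  calc _ = ∑ i, ∑ j, √(∑ j', g i j' ^ 2) * (g i j * ‖A i j‖ * √(∑ i', g i' j ^ 2)) :=
        Finset.sum_congr rfl fun i _ => Finset.sum_congr rfl fun j _ => by ring
    _ ≤ ‖(Matrix.of fun i j => ((g i j * ‖A i j‖ : ℝ) : 𝕜))‖ *
          (√(∑ i, √(∑ j, g i j ^ 2) ^ 2) * √(∑ j, √(∑ i, g i j ^ 2) ^ 2)) :=
      sum_mul_mul_le_norm_mul_sqrt_mul_sqrt (𝕜 := 𝕜) (fun i j => g i j * ‖A i j‖)
        (fun i => √(∑ j, g i j ^ 2)) fun j => √(∑ i, g i j ^ 2)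
    _ = ‖(Matrix.of fun i j => ((g i j * ‖A i j‖ : ℝ) : 𝕜))‖ * ∑ i, ∑ j, g i j ^ 2 := by
      have h_row (i : m) : √(∑ j, g i j ^ 2) ^ 2 = ∑ j, g i j ^ 2 := Real.sq_sqrt (by positivity)
      have h_col (j : n) : √(∑ i, g i j ^ 2) ^ 2 = ∑ i, g i j ^ 2 := Real.sq_sqrt (by positivity)
      simp only [h_row, h_col]
      rw [Finset.sum_comm (s := (Finset.univ : Finset n)), Real.mul_self_sqrt (by positivity)]
    _ ≤ C * ‖A‖ * ∑ i, ∑ j, g i j ^ 2 := by gcongr; exact h A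
    _ = C * (∑ i, ∑ j, g i j ^ 2) * ‖A‖ := by ring

lemma le_two_mul_sq_of_forall_le_sum_sq [Nonempty m] [Nonempty n] (hg : ∀ i j, 0 ≤ g i j)
    (h : ∀ A : Matrix m n 𝕜, ‖(Matrix.of fun i j => ((g i j * ‖A i j‖ : ℝ) : 𝕜))‖ ≤ C * ‖A‖)
    (h_row : ∀ i, K ≤ ∑ j, g i j ^ 2) (h_col : ∀ j, K ≤ ∑ i, g i j ^ 2) : K ≤ (2 * C) ^ 2 := by
  obtain hK | hK := le_or_gt K 0
  · exact hK.trans (sq_nonneg _)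
  have hC : 0 ≤ C := nonneg_of_norm_of_mul_norm_le h
  have h_total_pos : 0 < ∑ i, ∑ j, g i j ^ 2 :=
    Finset.sum_pos (fun i _ => hK.trans_le (h_row i)) Finset.univ_nonempty
  have h_dual := sum_mul_norm_le_two_mul_of_mem_rowColUnitBall
    (fun i j => mul_nonneg (by positivity) (hg i j)) (by positivity)
    (sum_sqrt_mul_sqrt_mul_norm_le h) (sqrt_mul_div_mem_rowColUnitBall hK h_row h_col)
  have h_entry (i : m) (j : n) : √(∑ j', g i j' ^ 2) * √(∑ i', g i' j ^ 2) * g i j *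
      |√K * g i j / (√(∑ j', g i j' ^ 2) * √(∑ i', g i' j ^ 2))| = √K * g i j ^ 2 := by
    have h_rowPos := Real.sqrt_pos.2 (hK.trans_le (h_row i))
    have h_colPos := Real.sqrt_pos.2 (hK.trans_le (h_col j))
    have := hg i j
    rw [abs_of_nonneg (by positivity)]
    field_simp
  simp only [Matrix.of_apply, RCLike.norm_ofReal, h_entry, ← Finset.mul_sum, ← mul_assoc]
    at h_dual
  exact (Real.sqrt_le_left (by positivity)).1 (le_of_mul_le_mul_right h_dual h_total_pos)

lemma exists_sum_sq_le_two_mul_sq [Nonempty m] [Nonempty n] (hg : ∀ i j, 0 ≤ g i j)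
    (h : ∀ A : Matrix m n 𝕜, ‖(Matrix.of fun i j => ((g i j * ‖A i j‖ : ℝ) : 𝕜))‖ ≤ C * ‖A‖) :
    (∃ i, ∑ j, g i j ^ 2 ≤ (2 * C) ^ 2) ∨ ∃ j, ∑ i, g i j ^ 2 ≤ (2 * C) ^ 2 := by
  obtain ⟨k₀, hk₀⟩ :=
    Finite.exists_min (Sum.elim (fun i => ∑ j, g i j ^ 2) fun j => ∑ i, g i j ^ 2)
  have h_min := le_two_mul_sq_of_forall_le_sum_sq hg h (fun i => hk₀ (.inl i))
    fun j => hk₀ (.inr j)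
  cases k₀ with
  | inl i => exact .inl ⟨i, h_min⟩
  | inr j => exact .inr ⟨j, h_min⟩

end LightLine

section Partition

variable {S T M : Type*} [AddCommMonoid M] {f : S × T → M} {K : M} {A : Finset S} {B : Finset T}
  {Γ Γ' : Set (S × T)}

/-- Within the finite rectangle `A × B`, the sums of `f` along the rows of `Γ` and along the columns
of its complement are at most `K`. -/
def IsLightPartition [LE M] (f : S × T → M) (K : M) (A : Finset S) (B : Finset T)
    (Γ : Set (S × T)) : Prop :=
  (∀ s ∈ A, ∑ t ∈ B, Γ.indicator f (s, t) ≤ K) ∧ ∀ t ∈ B, ∑ s ∈ A, Γᶜ.indicator f (s, t) ≤ K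

lemma isLightPartition_of_product_eq_empty [LE M] (hK : 0 ≤ K) (h : A ×ˢ B = ∅) :
    IsLightPartition f K A B Γ := by
  obtain rfl | rfl := Finset.product_eq_empty.1 h <;> simp [IsLightPartition, hK]

lemma IsLightPartition.preimage_swap_compl [LE M] (h : IsLightPartition f K A B Γ) :
    IsLightPartition (f ∘ Prod.swap) K B A (Prod.swap ⁻¹' Γᶜ) :=
  ⟨by simpa only [Set.indicator_comp_right] using! h.2,
    by simpa only [← Set.preimage_compl, compl_compl, Set.indicator_comp_right] using! h.1⟩

lemma IsLightPartition.congr [LE M] (h : IsLightPartition f K A B Γ)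
    (h_mem : ∀ p ∈ A ×ˢ B, p ∈ Γ ↔ p ∈ Γ') : IsLightPartition f K A B Γ' := by
  classical
  have h_indicator {s : S} {t : T} (hs : s ∈ A) (ht : t ∈ B) :
      Γ'.indicator f (s, t) = Γ.indicator f (s, t) ∧
        Γ'ᶜ.indicator f (s, t) = Γᶜ.indicator f (s, t) := by
    simp [Set.indicator_apply, h_mem (s, t) (Finset.mk_mem_product hs ht)]
  refine ⟨fun s hs => ?_, fun t ht => ?_⟩
  · rw [Finset.sum_congr rfl fun t ht => (h_indicator hs ht).1]
    exact h.1 s hs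
  · rw [Finset.sum_congr rfl fun s hs => (h_indicator hs ht).2]
    exact h.2 t ht

lemma IsLightPartition.insert_left [LE M] [DecidableEq S] (h : IsLightPartition f K A B Γ) {s₀ : S}
    (hs₀ : s₀ ∉ A) (h_light : ∑ t ∈ B, f (s₀, t) ≤ K) :
    IsLightPartition f K (insert s₀ A) B (Γ ∪ {p | p.1 = s₀}) := by
  classical
  have h_old : IsLightPartition f K A B (Γ ∪ {p | p.1 = s₀}) := by
    refine h.congr fun p hp => ?_
    simp [ne_of_mem_of_not_mem (Finset.mem_product.1 hp).1 hs₀]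
  refine ⟨Finset.forall_mem_insert _ _ _ |>.2 ⟨?_, h_old.1⟩, fun t ht => ?_⟩
  · simpa [Set.indicator_apply] using h_light
  · rw [Finset.sum_insert hs₀]
    simpa [Set.indicator_apply] using h_old.2 t ht

lemma IsLightPartition.exists_insert_right [LE M] [DecidableEq T] (h : IsLightPartition f K A B Γ)
    {t₀ : T} (ht₀ : t₀ ∉ B) (h_light : ∑ s ∈ A, f (s, t₀) ≤ K) :
    ∃ Γ', IsLightPartition f K A (insert t₀ B) Γ' :=
  ⟨_, (h.preimage_swap_compl.insert_left ht₀ h_light).preimage_swap_compl⟩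

lemma exists_isLightPartition [Preorder M] (hK : 0 ≤ K)
    (h : ∀ (A : Finset S) (B : Finset T), A.Nonempty → B.Nonempty →
      (∃ s ∈ A, ∑ t ∈ B, f (s, t) ≤ K) ∨ ∃ t ∈ B, ∑ s ∈ A, f (s, t) ≤ K)
    (A : Finset S) (B : Finset T) : ∃ Γ, IsLightPartition f K A B Γ := by
  classical
  induction hk : A.card + B.card using Nat.strong_induction_on generalizing A B with
  | h k ih =>
    subst hk
    obtain h_empty | h_nonempty := (A ×ˢ B).eq_empty_or_nonempty
    · exact ⟨∅, isLightPartition_of_product_eq_empty hK h_empty⟩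
    obtain ⟨hA, hB⟩ := Finset.nonempty_product.1 h_nonempty
    obtain ⟨s₀, hs₀, h_light⟩ | ⟨t₀, ht₀, h_light⟩ := h A B hA hB
    · obtain ⟨Γ, hΓ⟩ := ih _ (Nat.add_lt_add_right (Finset.card_erase_lt_of_mem hs₀) _)
        (A.erase s₀) B rfl
      exact ⟨_, Finset.insert_erase hs₀ ▸ hΓ.insert_left (A.notMem_erase s₀) h_light⟩
    · obtain ⟨Γ, hΓ⟩ := ih _ (Nat.add_lt_add_left (Finset.card_erase_lt_of_mem ht₀) _)
        A (B.erase t₀) rfl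
      exact Finset.insert_erase ht₀ ▸ hΓ.exists_insert_right (B.notMem_erase t₀) h_light

variable [PartialOrder M] [CanonicallyOrderedAdd M]

lemma IsLightPartition.mono {A' : Finset S} {B' : Finset T} (h : IsLightPartition f K A B Γ)
    (hA : A' ⊆ A) (hB : B' ⊆ B) : IsLightPartition f K A' B' Γ :=
  ⟨fun s hs => (Finset.sum_le_sum_of_subset hB).trans (h.1 s (hA hs)),
    fun t ht => (Finset.sum_le_sum_of_subset hA).trans (h.2 t (hB ht))⟩

lemma exists_forall_isLightPartition (h : ∀ A B, ∃ Γ, IsLightPartition f K A B Γ) :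
    ∃ Γ, ∀ A B, IsLightPartition f K A B Γ := by
  classical
  choose Γ hΓ using h
  obtain ⟨χ, hχ⟩ := Finset.rado_selection (β := fun _ : S × T => Prop)
    fun P => (· ∈ Γ (P.image Prod.fst) (P.image Prod.snd))
  refine ⟨{p | χ p}, fun A B => ?_⟩
  obtain h_empty | h_nonempty := (A ×ˢ B).eq_empty_or_nonempty
  · exact isLightPartition_of_product_eq_empty (zero_le) h_empty
  obtain ⟨hA, hB⟩ := Finset.nonempty_product.1 h_nonempty
  obtain ⟨P, hP, h_agree⟩ := hχ (A ×ˢ B)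
  refine ((hΓ (P.image Prod.fst) (P.image Prod.snd)).mono ?_ ?_).congr
    fun p hp => (h_agree p hp).to_iff.symm
  · simpa [Finset.product_image_fst hB] using Finset.image_subset_image (f := Prod.fst) hP
  · simpa [Finset.product_image_snd hA] using Finset.image_subset_image (f := Prod.snd) hP

end Partition

lemma sum_nnnorm_sq_le_ofReal {ι E : Type*} [SeminormedAddGroup E] {F : Finset ι} {K : ℝ}
    (z : ι → E) (h : ∑ i : F, ‖z i‖ ^ 2 ≤ K) :
    ∑ i ∈ F, (‖z i‖₊ : ℝ≥0∞) ^ 2 ≤ ENNReal.ofReal K := by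
  rw [Finset.sum_coe_sort F fun i => ‖z i‖ ^ 2] at h
  refine le_of_eq_of_le ?_ (ENNReal.ofReal_le_ofReal h)
  simp [ENNReal.ofReal_sum_of_nonneg, ENNReal.ofReal_pow, enorm_eq_nnnorm]

lemma exists_sum_nnnorm_sq_le_of_isSchurMultiplier {S T : Type*} {ψ : S × T → ℂ} {C : ℝ}
    (h : ∀ ε : S × T → ℂ, (∀ p, ‖ε p‖ = 1) → IsSchurMultiplier (fun p => ε p * ψ p) C)
    {A : Finset S} {B : Finset T} (hA : A.Nonempty) (hB : B.Nonempty) :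
    (∃ s ∈ A, ∑ t ∈ B, (‖ψ (s, t)‖₊ : ℝ≥0∞) ^ 2 ≤ ENNReal.ofReal ((2 * C) ^ 2)) ∨
      ∃ t ∈ B, ∑ s ∈ A, (‖ψ (s, t)‖₊ : ℝ≥0∞) ^ 2 ≤ ENNReal.ofReal ((2 * C) ^ 2) := by
  classical
  have := hA.to_subtype
  have := hB.to_subtype
  obtain ⟨t, ht⟩ | ⟨s, hs⟩ := exists_sum_sq_le_two_mul_sq (𝕜 := ℂ)
    (g := fun (t : B) (s : A) => ‖ψ (s, t)‖) (fun _ _ => norm_nonneg _)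
    (norm_of_norm_mul_norm_le_of_isSchurMultiplier h (.subtype _) (.subtype _))
  · exact .inr ⟨t, t.2, sum_nnnorm_sq_le_ofReal (fun s => ψ (s, t)) ht⟩
  · exact .inl ⟨s, s.2, sum_nnnorm_sq_le_ofReal (fun t => ψ (s, t)) hs⟩

theorem stmt_7_general {S T : Type*} (ψ : S × T → ℂ) (C : ℝ)
    (h : ∀ ε : S × T → ℂ, (∀ p, ‖ε p‖ = 1) →
      IsSchurMultiplier (fun p => ε p * ψ p) C) :
    ∃ Γ₁ Γ₂ : Set (S × T), Γ₁ ∪ Γ₂ = Set.univ ∧ Disjoint Γ₁ Γ₂ ∧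
      (∀ s : S, (∑' t : T, Γ₁.indicator (fun p => (‖ψ p‖₊ : ℝ≥0∞) ^ 2) (s, t))
          ≤ ENNReal.ofReal ((2 * C) ^ 2)) ∧
      (∀ t : T, (∑' s : S, Γ₂.indicator (fun p => (‖ψ p‖₊ : ℝ≥0∞) ^ 2) (s, t))
          ≤ ENNReal.ofReal ((2 * C) ^ 2)) := by
  obtain ⟨Γ, hΓ⟩ := exists_forall_isLightPartition <| exists_isLightPartition
    (f := fun p => (‖ψ p‖₊ : ℝ≥0∞) ^ 2) zero_le
    fun A B hA hB => exists_sum_nnnorm_sq_le_of_isSchurMultiplier h hA hB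
  refine ⟨Γ, Γᶜ, Γ.union_compl_self, disjoint_compl_right, fun s => ?_, fun t => ?_⟩
  · exact ENNReal.summable.tsum_le_of_sum_le fun B => (hΓ {s} B).1 s (Finset.mem_singleton_self s)
  · exact ENNReal.summable.tsum_le_of_sum_le fun A => (hΓ A {t}).2 t (Finset.mem_singleton_self t)

/-- if for every `ε : S × T → ℂ` with `|ε| ≤ 1` the product `ε·ψ` is a Schur
multiplier of norm at most `C`, then there is a disjoint partition `S × T = Γ₁ ∪ Γ₂` with
`sup_s Σ_{t:(s,t)∈Γ₁} |ψ(s,t)|² ≤ (4C)²` and `sup_t Σ_{s:(s,t)∈Γ₂} |ψ(s,t)|² ≤ (4C)²`. -/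
theorem stmt_7 {S T : Type*} (ψ : S × T → ℂ) (C : ℝ)
    (h : ∀ ε : S × T → ℂ, (∀ p, ‖ε p‖ ≤ 1) →
      IsSchurMultiplier (fun p => ε p * ψ p) C) :
    ∃ Γ₁ Γ₂ : Set (S × T), Γ₁ ∪ Γ₂ = Set.univ ∧ Disjoint Γ₁ Γ₂ ∧
      (∀ s : S, (∑' t : T, Γ₁.indicator (fun p => (‖ψ p‖₊ : ℝ≥0∞) ^ 2) (s, t))
          ≤ ENNReal.ofReal ((4 * C) ^ 2)) ∧
      (∀ t : T, (∑' s : S, Γ₂.indicator (fun p => (‖ψ p‖₊ : ℝ≥0∞) ^ 2) (s, t))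
          ≤ ENNReal.ofReal ((4 * C) ^ 2)) := by
  obtain ⟨Γ₁, Γ₂, h_union, h_disjoint, h_row, h_col⟩ :=
    stmt_7_general ψ C fun ε hε => h ε fun p => (hε p).le
  have h_const : ENNReal.ofReal ((2 * C) ^ 2) ≤ ENNReal.ofReal ((4 * C) ^ 2) :=
    ENNReal.ofReal_le_ofReal (by nlinarith [sq_nonneg C])
  exact ⟨Γ₁, Γ₂, h_union, h_disjoint, fun s => (h_row s).trans h_const,
    fun t => (h_col t).trans h_const⟩
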